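/- For every integer k ≥ 2, the maps φ₁ and φ₂ are injective on H_{k−1} and intertwine the o(n,ℝ)-actions: for every homogeneous polynomial h of degree k−1 and all 1 ≤ r < s ≤ n, φᵢ((x_r∂_{x_s} − x_s∂_{x_r})(h)) = L_{r,s}(φᵢ(h)) for i = 1,2, where L_{r,s}(u) = (x_r∂_{x_s} − x_s∂_{x_r})(u) + u_s ς_r − u_r ς_s. -/

import Mathlib

open MvPolynomial

/-- The Laplacian `Δ = ∑ᵣ ∂²_{xᵣ}` on `ℝ[x₁,…,xₙ]`. -/
noncomputable def lap {n : ℕ} (p : MvPolynomial (Fin n) ℝ) : MvPolynomial (Fin n) ℝ :=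
  ∑ r : Fin n, pderiv r (pderiv r p)

/-- `φ₁(f) = (k−1)[(∑ᵣ xᵣ²)·ψ(f) − (2k+n−4)·f·(x₁,…,xₙ)]` where `ψ` is the gradient. -/
noncomputable def phi1 {n : ℕ} (k : ℕ) (f : MvPolynomial (Fin n) ℝ) :
    Fin n → MvPolynomial (Fin n) ℝ :=
  fun j =>
    ((k : ℝ) - 1) • ((∑ r : Fin n, X r ^ 2) * pderiv j f
      - (2 * (k : ℝ) + n - 4) • (f * X j))

/-- `φ₂(f) = (∑ᵣ xᵣ²)·ψ(f)` where `ψ` is the gradient map. -/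
noncomputable def phi2 {n : ℕ} (f : MvPolynomial (Fin n) ℝ) :
    Fin n → MvPolynomial (Fin n) ℝ :=
  fun j => (∑ r : Fin n, X r ^ 2) * pderiv j f

/-- The `o(n,ℝ)`-action on tuples:
`L_{r,s}(u) = (x_r∂_{x_s} − x_s∂_{x_r})(u) + u_s ς_r − u_r ς_s`. -/
noncomputable def Lop {n : ℕ} (r s : Fin n) (u : Fin n → MvPolynomial (Fin n) ℝ) :
    Fin n → MvPolynomial (Fin n) ℝ :=
  fun j => (X r * pderiv s (u j) - X s * pderiv r (u j))
    + (if j = r then u s else 0) - (if j = s then u r else 0)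

section

variable {n : ℕ}

theorem pderiv_pderiv_comm {σ R : Type*} [CommRing R] (i j : σ) (p : MvPolynomial σ R) :
    pderiv i (pderiv j p) = pderiv j (pderiv i p) := by
  classical
  have h : ⁅pderiv (R := R) i, pderiv (R := R) j⁆ = 0 := by
    refine derivation_ext fun m => ?_
    simp only [Derivation.commutator_apply, pderiv_X, Pi.single_apply, Derivation.zero_apply]
    split_ifs <;> simp
  simpa [Derivation.commutator_apply, sub_eq_zero] using congrArg (fun D => D p) h

theorem sum_X_sq_ne_zero (hn : 0 < n) :
    (∑ r : Fin n, X r ^ 2 : MvPolynomial (Fin n) ℝ) ≠ 0 := by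
  intro h
  have h1 := congrArg (eval fun _ => (1 : ℝ)) h
  simp at h1
  omega

theorem pderiv_sum_X_sq (s : Fin n) :
    pderiv s (∑ r : Fin n, X r ^ 2 : MvPolynomial (Fin n) ℝ) = 2 * X s := by
  simp [pderiv_X, Pi.single_apply, Derivation.leibniz_pow, mul_comm]

theorem sum_X_mul_phi2 {d : ℕ} {f : MvPolynomial (Fin n) ℝ} (hf : f.IsHomogeneous d) :
    ∑ j, X j * phi2 f j = (d : ℝ) • ((∑ r : Fin n, X r ^ 2) * f) := by
  have h : ∑ j, X j * phi2 f j = (∑ r : Fin n, X r ^ 2) * ∑ j, X j * pderiv j f := by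
    simp only [phi2, mul_left_comm, Finset.mul_sum]
  rw [h, hf.sum_X_mul_pderiv, mul_smul_comm, Nat.cast_smul_eq_nsmul]

theorem phi1_eq (k : ℕ) (f : MvPolynomial (Fin n) ℝ) :
    phi1 k f = ((k : ℝ) - 1) • (phi2 f - (2 * (k : ℝ) + n - 4) • fun j => f * X j) :=
  rfl

theorem sum_X_mul_phi1 {d : ℕ} (k : ℕ) {f : MvPolynomial (Fin n) ℝ} (hf : f.IsHomogeneous d) :
    ∑ j, X j * phi1 k f j =
      (((k : ℝ) - 1) * (d - (2 * k + n - 4))) • ((∑ r : Fin n, X r ^ 2) * f) := by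
  have h : ∑ j, X j * (f * X j) = (∑ r : Fin n, X r ^ 2) * f := by
    rw [Finset.sum_mul]
    exact Finset.sum_congr rfl fun j _ => by ring
  simp only [phi1_eq, Pi.smul_apply, Pi.sub_apply, mul_smul_comm, mul_sub,
    ← Finset.smul_sum, Finset.sum_sub_distrib,
    sum_X_mul_phi2 hf, h]
  module

/-- Contracting with `(x₁,…,xₙ)` recovers `f` up to the factor `c · ∑ᵣ xᵣ²`. -/
theorem eq_of_sum_X_mul_eq {c : ℝ} (hn : 0 < n) (hc : c ≠ 0)
    {φ : MvPolynomial (Fin n) ℝ → Fin n → MvPolynomial (Fin n) ℝ} {f g : MvPolynomial (Fin n) ℝ}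
    (hf : ∑ j, X j * φ f j = c • ((∑ r : Fin n, X r ^ 2) * f))
    (hg : ∑ j, X j * φ g j = c • ((∑ r : Fin n, X r ^ 2) * g))
    (h : φ f = φ g) : f = g := by
  rw [h, hg] at hf
  exact (mul_left_cancel₀ (sum_X_sq_ne_zero hn) (smul_right_injective _ hc hf)).symm

theorem phi2_rotation (h : MvPolynomial (Fin n) ℝ) (r s : Fin n) :
    phi2 (X r * pderiv s h - X s * pderiv r h) = Lop r s (phi2 h) := by
  funext j
  have hs : pderiv j (pderiv s h) = pderiv s (pderiv j h) := pderiv_pderiv_comm ..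
  have hr : pderiv j (pderiv r h) = pderiv r (pderiv j h) := pderiv_pderiv_comm ..
  simp only [phi2, Lop, map_sub, Derivation.leibniz, smul_eq_mul, pderiv_sum_X_sq, pderiv_X,
    Pi.single_apply, hs, hr, eq_comm (a := j)]
  split_ifs <;> ring

theorem Lop_mul_X (h : MvPolynomial (Fin n) ℝ) (r s : Fin n) :
    Lop r s (fun j => h * X j) = fun j => (X r * pderiv s h - X s * pderiv r h) * X j := by
  funext j
  simp only [Lop, Derivation.leibniz, smul_eq_mul, pderiv_X, Pi.single_apply]
  split_ifs <;> ring

theorem Lop_sub (r s : Fin n) (u v : Fin n → MvPolynomial (Fin n) ℝ) :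
    Lop r s (u - v) = Lop r s u - Lop r s v := by
  funext j
  simp only [Lop, Pi.sub_apply, map_sub]
  split_ifs <;> ring

theorem Lop_smul (r s : Fin n) (c : ℝ) (u : Fin n → MvPolynomial (Fin n) ℝ) :
    Lop r s (c • u) = c • Lop r s u := by
  funext j
  simp only [Lop, Pi.smul_apply, Derivation.map_smul, mul_smul_comm, smul_add, smul_sub, smul_ite, smul_zero]

theorem phi1_rotation (k : ℕ) (h : MvPolynomial (Fin n) ℝ) (r s : Fin n) :
    phi1 k (X r * pderiv s h - X s * pderiv r h) = Lop r s (phi1 k h) := by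
  rw [phi1_eq, phi1_eq, Lop_smul, Lop_sub, Lop_smul, Lop_mul_X, phi2_rotation]

end

/-- for `k ≥ 2`, `φ₁` and `φ₂` are injective on `H_{k−1}` (the harmonic
homogeneous degree-`(k−1)` polynomials) and intertwine the `o(n,ℝ)`-actions on
homogeneous degree-`(k−1)` polynomials. -/
theorem phi1_phi2_injective_equivariant (n : ℕ) (hn : 3 ≤ n) (k : ℕ) (hk : 2 ≤ k) :
    (∀ h g : MvPolynomial (Fin n) ℝ,
      h.IsHomogeneous (k - 1) → lap h = 0 →
      g.IsHomogeneous (k - 1) → lap g = 0 →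
      phi1 k h = phi1 k g → h = g) ∧
    (∀ h g : MvPolynomial (Fin n) ℝ,
      h.IsHomogeneous (k - 1) → lap h = 0 →
      g.IsHomogeneous (k - 1) → lap g = 0 →
      phi2 h = phi2 g → h = g) ∧
    (∀ h : MvPolynomial (Fin n) ℝ, h.IsHomogeneous (k - 1) →
      ∀ r s : Fin n, r < s →
        phi1 k (X r * pderiv s h - X s * pderiv r h) = Lop r s (phi1 k h) ∧
        phi2 (X r * pderiv s h - X s * pderiv r h) = Lop r s (phi2 h)) := by
  have hk' : (2 : ℝ) ≤ k := by exact_mod_cast hk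
  have hn' : (3 : ℝ) ≤ n := by exact_mod_cast hn
  have hcast : ((k - 1 : ℕ) : ℝ) = k - 1 := by push_cast [Nat.cast_sub (by omega : 1 ≤ k)]; ring
  refine ⟨fun h g hh _ hg _ heq => ?_, fun h g hh _ hg _ heq => ?_, fun h _ r s _ =>
    ⟨phi1_rotation k h r s, phi2_rotation h r s⟩⟩
  · refine eq_of_sum_X_mul_eq (by omega) (mul_ne_zero ?_ ?_) (sum_X_mul_phi1 k hh)
      (sum_X_mul_phi1 k hg) heq
    · linarith
    · rw [hcast]
      linarith
  · refine eq_of_sum_X_mul_eq (by omega) ?_ (sum_X_mul_phi2 hh) (sum_X_mul_phi2 hg) heq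
    rw [hcast]
    linarith
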